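/- Let f be an ergodic invertible measure-preserving transformation of a standard Borel probability space (X,μ) and let (f,A) be an essentially unbounded cocycle with values in SL±(2,ℝ). Then the skew product F(x,E) = (f(x), A(x)E) on X × ℙ(ℝ²) admits at most two ergodic F-invariant probability measures projecting to μ. -/

import Mathlib

open MeasureTheory Filter
open scoped ENNReal

/-- Matrices are measurable as functions of their entries. -/
instance matrixMeasurableSpace {m n α : Type*} [MeasurableSpace α] :
    MeasurableSpace (Matrix m n α) :=
  show MeasurableSpace (m → n → α) from inferInstance

/-- The shift map on two-sided sequences. -/
def shift {Y : Type*} (ω : ℤ → Y) : ℤ → Y := fun n => ω (n + 1)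

/-- The skew-shift `f̄(ω,x) = (θω, f_{ω₀}(x))` of a random transformation. -/
def fbar {Y X : Type*} (f : Y → X → X) : (ℤ → Y) × X → (ℤ → Y) × X :=
  fun q => (shift q.1, f (q.1 0) q.2)

/-- The locally constant map `Ā(ω,x) = A_{ω₀}(x)` defining a random cocycle. -/
def Abar {Y X G : Type*} (A : Y → X → G) : (ℤ → Y) × X → G := fun q => A (q.1 0) q.2

/-- Iterates of a cocycle: `cocycleIter T A n z = A(T^{n-1} z) ⋯ A(T z) A(z)`. -/
def cocycleIter {Z G : Type*} [Monoid G] (T : Z → Z) (A : Z → G) : ℕ → Z → G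
  | 0, _ => 1
  | n + 1, z => cocycleIter T A n (T z) * A z

/-- Lower asymptotic density of a set of natural numbers. -/
noncomputable def lowerDensity (D : Set ℕ) : ℝ :=
  Filter.liminf (fun n : ℕ => ((D ∩ Set.Iic n).ncard : ℝ) / n) Filter.atTop

/-- A sequence of reals converges essentially to infinity: for every `K > 0` the set
of times at which the sequence is `≤ K` has lower asymptotic density zero. -/
def ConvergesEssentiallyToInfinity (u : ℕ → ℝ) : Prop :=
  ∀ K > (0 : ℝ), lowerDensity {n | u n ≤ K} = 0

/-- The operator norm of a real `d × d` matrix acting on Euclidean space. -/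
noncomputable def opNorm {d : ℕ} (M : Matrix (Fin d) (Fin d) ℝ) : ℝ :=
  ‖LinearMap.toContinuousLinearMap (Matrix.toEuclideanLin M)‖

/-- The projective space of `ℝ^d`. -/
abbrev Proj (d : ℕ) := Projectivization ℝ (Fin d → ℝ)

noncomputable instance (d : ℕ) : MeasurableSpace (Proj d) :=
  show MeasurableSpace (Quotient _) from inferInstance

lemma glInjective {d : ℕ} (A : GL (Fin d) ℝ) :
    Function.Injective (Matrix.toLin' (A : Matrix (Fin d) (Fin d) ℝ)) := by
  have h : Function.LeftInverse
      (Matrix.toLin' (((A⁻¹ : GL (Fin d) ℝ)) : Matrix (Fin d) (Fin d) ℝ))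
      (Matrix.toLin' ((A : Matrix (Fin d) (Fin d) ℝ))) := by
    intro v
    rw [← Matrix.toLin'_mul_apply]
    have h1 : ((A⁻¹ : GL (Fin d) ℝ) : Matrix (Fin d) (Fin d) ℝ) *
        (A : Matrix (Fin d) (Fin d) ℝ) = 1 := by
      exact_mod_cast A.inv_mul
    rw [h1]
    simp
  exact h.injective

/-- The projective action of an invertible matrix on `ℙ(ℝ^d)`. -/
noncomputable def projAction {d : ℕ} (A : GL (Fin d) ℝ) : Proj d → Proj d :=
  Projectivization.map (Matrix.toLin' (A : Matrix (Fin d) (Fin d) ℝ)) (glInjective A)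

/-!
Distinct ergodic measures are mutually singular. Three of them over `μ` can therefore be
approximated from inside by three compact sets of `X × ℙ(ℝ²)` which are fibrewise `δ`-separated for
the sine metric. The maximal ergodic inequality provides, over a common base point `x`, three lines
whose orbits under the skew product all spend at least three quarters of the time in the respective
sets, from time zero on and uniformly over all orbit segments. Hence, at a set of times `n` of lower
density at least a quarter, `A^n(x)` maps these three `δ`-separated lines to `δ`-separated lines. A
matrix of determinant at most one in absolute value that does so has norm at most `2 / δ²`, which
contradicts essential unboundedness.
-/

lemma encard_le_two_iff {α : Type*} {s : Set α} :
    s.encard ≤ 2 ↔ ∀ a ∈ s, ∀ b ∈ s, ∀ c ∈ s, a = b ∨ a = c ∨ b = c := by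
  refine ⟨fun h a ha b hb c hc => ?_, fun h => ?_⟩
  · by_contra! hne
    have hsub : {a, b, c} ⊆ s := by grind
    have hle := (Set.encard_le_encard hsub).trans h
    rw [Set.encard_eq_three.2 ⟨a, b, c, hne.1, hne.2.1, hne.2.2, rfl⟩] at hle
    exact absurd hle (by norm_num)
  · by_contra! hlt
    obtain ⟨t, hts, ht⟩ := Set.exists_subset_encard_eq (Order.add_one_le_of_lt hlt)
    rw [two_add_one_eq_three] at ht
    obtain ⟨a, b, c, hab, hac, hbc, rfl⟩ := Set.encard_eq_three.1 ht
    have habc := h a (hts (by simp)) b (hts (by simp)) c (hts (by simp))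
    tauto

section MaximalErgodicInequality

variable {Z : Type*} {T : Z → Z} {g : Z → ℝ}

lemma partialSups_birkhoffSum_pos_iff {N : ℕ} {x : Z} :
    0 < partialSups (birkhoffSum T g) N x ↔ ∃ n ≤ N, 0 < birkhoffSum T g n x := by
  rw [Pi.partialSups_apply, ← not_le, partialSups_le_iff]
  push Not
  rfl

lemma partialSups_birkhoffSum_sub_le_indicator (T : Z → Z) (g : Z → ℝ) (N : ℕ) (x : Z) :
    partialSups (birkhoffSum T g) N x - partialSups (birkhoffSum T g) N (T x) ≤
      {x | ∃ n ≤ N, 0 < birkhoffSum T g n x}.indicator g x := by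
  simp only [Set.indicator_apply, Set.mem_ofPred_eq, ← partialSups_birkhoffSum_pos_iff,
    Pi.partialSups_apply]
  split_ifs with hpos
  · obtain ⟨n, hnN, hn⟩ := exists_partialSups_eq (birkhoffSum T g · x) N
    rw [hn] at hpos ⊢
    obtain _ | n := n
    · simp at hpos
    · rw [birkhoffSum_succ', sub_le_iff_le_add]
      gcongr
      exact le_partialSups_of_le (birkhoffSum T g · (T x)) (n.le_succ.trans hnN)
  · have hnonneg := le_partialSups_of_le (birkhoffSum T g · (T x)) N.zero_le
    rw [birkhoffSum_zero] at hnonneg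
    linarith

variable [MeasurableSpace Z] {μ : Measure Z}

lemma measurable_birkhoffSum (hT : Measurable T) (hg : Measurable g) (n : ℕ) :
    Measurable (birkhoffSum T g n) :=
  Finset.measurable_sum _ fun k _ => hg.comp (hT.iterate k)

lemma integrable_birkhoffSum (hT : MeasurePreserving T μ μ) (hg : Integrable g μ) (n : ℕ) :
    Integrable (birkhoffSum T g n) μ :=
  integrable_finsetSum _ fun k _ => (hT.iterate k).integrable_comp_of_integrable hg

lemma integrable_partialSups {F : ℕ → Z → ℝ} (hF : ∀ n, Integrable (F n) μ) (N : ℕ) :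
    Integrable (partialSups F N) μ := by
  induction N with
  | zero => simpa only [partialSups_zero] using hF 0
  | succ N ih => simpa only [partialSups_add_one] using ih.sup (hF (N + 1))

lemma measurableSet_exists_birkhoffSum_pos (hT : Measurable T) (hg : Measurable g) (N : ℕ) :
    MeasurableSet {x | ∃ n ≤ N, 0 < birkhoffSum T g n x} := by
  simp only [Set.ofPred_exists, ← exists_prop]
  exact MeasurableSet.iUnion fun n => MeasurableSet.iUnion fun _ =>
    measurableSet_lt measurable_const (measurable_birkhoffSum hT hg n)

/-- The maximal ergodic theorem, by Garsia's argument. -/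
theorem setIntegral_exists_birkhoffSum_pos_nonneg (hT : MeasurePreserving T μ μ)
    (hgm : Measurable g) (hg : Integrable g μ) (N : ℕ) :
    0 ≤ ∫ x in {x | ∃ n ≤ N, 0 < birkhoffSum T g n x}, g x ∂μ := by
  set M := partialSups (birkhoffSum T g) N
  have hM : Integrable M μ := integrable_partialSups (integrable_birkhoffSum hT hg) N
  have hMT : Integrable (fun x => M (T x)) μ := hT.integrable_comp_of_integrable hM
  have hset := measurableSet_exists_birkhoffSum_pos hT.measurable hgm N
  have hinv : ∫ x, M (T x) ∂μ = ∫ x, M x ∂μ := by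
    rw [← integral_map hT.aemeasurable (by rw [hT.map_eq]; exact hM.aestronglyMeasurable),
      hT.map_eq]
  calc (0 : ℝ) = ∫ x, (M x - M (T x)) ∂μ := by rw [integral_sub hM hMT, hinv, sub_self]
    _ ≤ ∫ x, {x | ∃ n ≤ N, 0 < birkhoffSum T g n x}.indicator g x ∂μ :=
        integral_mono (hM.sub hMT) (hg.indicator hset)
          (partialSups_birkhoffSum_sub_le_indicator T g N)
    _ = ∫ x in {x | ∃ n ≤ N, 0 < birkhoffSum T g n x}, g x ∂μ := integral_indicator hset

theorem mul_measureReal_lt_birkhoffSum_le_integral [IsFiniteMeasure μ]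
    (hT : MeasurePreserving T μ μ) (hgm : Measurable g) (hg : Integrable g μ) (hg0 : 0 ≤ g)
    (c : ℝ) : c * μ.real {x | ∃ n : ℕ, c * n < birkhoffSum T g n x} ≤ ∫ x, g x ∂μ := by
  set P : ℕ → Set Z := fun N => {x | ∃ n ≤ N, c * n < birkhoffSum T g n x}
  have hPN (N : ℕ) : c * μ.real (P N) ≤ ∫ x, g x ∂μ := by
    have h := setIntegral_exists_birkhoffSum_pos_nonneg hT (hgm.sub measurable_const)
      (hg.sub (integrable_const c)) N
    have hP : {x | ∃ n ≤ N, 0 < birkhoffSum T (g - fun _ => c) n x} = P N := by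
      simp [P, birkhoffSum, mul_comm]
    simp only [hP, Pi.sub_apply] at h
    rw [integral_sub hg.integrableOn (integrable_const c).integrableOn, setIntegral_const,
      smul_eq_mul] at h
    linarith [setIntegral_le_integral (s := P N) hg (ae_of_all _ hg0)]
  have hmono : Monotone P := fun N N' h x ⟨n, hn, hx⟩ => ⟨n, hn.trans h, hx⟩
  have hunion : {x | ∃ n : ℕ, c * n < birkhoffSum T g n x} = ⋃ N, P N :=
    Set.ext fun x => ⟨fun ⟨n, hn⟩ => Set.mem_iUnion.2 ⟨n, n, le_rfl, hn⟩,
      fun h => let ⟨_, n, _, hn⟩ := Set.mem_iUnion.1 h; ⟨n, hn⟩⟩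
  have hlim : Tendsto (fun N => μ.real (P N)) atTop (nhds (μ.real (⋃ N, P N))) :=
    (ENNReal.tendsto_toReal (measure_ne_top μ _)).comp (tendsto_measure_iUnion_atTop hmono)
  rw [hunion]
  exact le_of_tendsto' (hlim.const_mul c) hPN

end MaximalErgodicInequality

section SojournSet

variable {Z : Type*} {T : Z → Z} {K : Set Z} {c : ℝ}

/-- The points all of whose finite orbit segments under `T` spend a proportion at most `c` of the
time outside `K`. Such points have uniform control on visits to `K` at all time scales at once. -/
def sojournSet (T : Z → Z) (K : Set Z) (c : ℝ) : Set Z :=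
  {x | ∀ n : ℕ, birkhoffSum T (Kᶜ.indicator 1) n x ≤ c * n}

lemma mem_of_mem_sojournSet (hc : c < 1) {x : Z} (hx : x ∈ sojournSet T K c) : x ∈ K := by
  by_contra hxK
  have h := hx 1
  rw [birkhoffSum_one, Set.indicator_of_mem (Set.mem_compl hxK), Pi.one_apply, Nat.cast_one,
    mul_one] at h
  exact hc.not_ge h

variable [MeasurableSpace Z]

lemma measurableSet_sojournSet (hT : Measurable T) (hK : MeasurableSet K) :
    MeasurableSet (sojournSet T K c) := by
  simp only [sojournSet, Set.ofPred_forall]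
  exact MeasurableSet.iInter fun n => measurableSet_le
    (measurable_birkhoffSum hT (measurable_one.indicator hK.compl) n) measurable_const

lemma mul_measureReal_compl_sojournSet_le {μ : Measure Z} [IsFiniteMeasure μ]
    (hT : MeasurePreserving T μ μ) (hK : MeasurableSet K) (c : ℝ) :
    c * μ.real (sojournSet T K c)ᶜ ≤ μ.real Kᶜ := by
  have hcompl : (sojournSet T K c)ᶜ =
      {x | ∃ n : ℕ, c * n < birkhoffSum T (Kᶜ.indicator 1) n x} := by
    ext x
    simp [sojournSet]
  rw [hcompl, ← integral_indicator_one hK.compl]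
  exact mul_measureReal_lt_birkhoffSum_le_integral hT (measurable_one.indicator hK.compl)
    ((integrable_const 1).indicator hK.compl) (Set.indicator_nonneg fun _ _ => zero_le_one) c

end SojournSet

section LowerDensity

lemma sum_indicator_one_eq_ncard (D : Set ℕ) (n : ℕ) :
    ∑ k ∈ Finset.range n, D.indicator (1 : ℕ → ℝ) k = (D ∩ Set.Iio n).ncard := by
  classical
  have hD : D ∩ Set.Iio n = ↑((Finset.range n).filter (· ∈ D)) := by
    ext k
    simp [and_comm]
  rw [hD, Set.ncard_coe_finset]
  simp [Set.indicator_apply]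

lemma le_lowerDensity_of_forall_le_sum_indicator {D : Set ℕ} {c : ℝ}
    (h : ∀ n : ℕ, c * n ≤ ∑ k ∈ Finset.range n, D.indicator (1 : ℕ → ℝ) k) :
    c ≤ lowerDensity D := by
  have hfin (n : ℕ) : (D ∩ Set.Iic n).Finite := (Set.finite_Iic n).inter_of_right D
  refine le_liminf_of_le (isCoboundedUnder_ge_of_le (x := 2) _ fun n => ?_) ?_
  · have hcard : ((D ∩ Set.Iic n).ncard : ℝ) ≤ n + 1 := by
      exact_mod_cast (Set.ncard_le_ncard Set.inter_subset_right (Set.finite_Iic n)).trans_eq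
        (by simp [Set.ncard_eq_toFinset_card'])
    rcases n.eq_zero_or_pos with rfl | hn
    · simp
    · have hn' : (1 : ℝ) ≤ n := by exact_mod_cast hn
      rw [div_le_iff₀ (by linarith)]
      linarith
  · filter_upwards [eventually_gt_atTop 0] with n hn
    have hcard : (D ∩ Set.Iio n).ncard ≤ (D ∩ Set.Iic n).ncard :=
      Set.ncard_le_ncard (Set.inter_subset_inter_right D Set.Iio_subset_Iic_self) (hfin n)
    rw [le_div_iff₀ (by exact_mod_cast hn)]
    refine ((h n).trans_eq (sum_indicator_one_eq_ncard D n)).trans ?_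
    exact_mod_cast hcard

lemma le_lowerDensity_of_mem_sojournSet {Z ι : Type*} [Fintype ι] {T : Z → Z} {K : ι → Set Z}
    {c : ℝ} {q : ι → Z} (hq : ∀ i, q i ∈ sojournSet T (K i) c) {D : Set ℕ}
    (hD : ∀ k, (∀ i, T^[k] (q i) ∈ K i) → k ∈ D) : 1 - Fintype.card ι * c ≤ lowerDensity D := by
  refine le_lowerDensity_of_forall_le_sum_indicator fun n => ?_
  have hone (k : ℕ) :
      1 - ∑ i, (K i)ᶜ.indicator 1 (T^[k] (q i)) ≤ D.indicator (1 : ℕ → ℝ) k := by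
    have hnonneg (i : ι) : (0 : ℝ) ≤ (K i)ᶜ.indicator 1 (T^[k] (q i)) :=
      Set.indicator_nonneg (fun _ _ => zero_le_one) _
    by_cases hk : k ∈ D
    · rw [Set.indicator_of_mem hk, Pi.one_apply]
      linarith [Finset.sum_nonneg fun i (_ : i ∈ Finset.univ) => hnonneg i]
    · obtain ⟨i, hi⟩ := not_forall.1 (mt (hD k) hk)
      have hle := Finset.single_le_sum (fun i _ => hnonneg i) (Finset.mem_univ i)
      rw [Set.indicator_of_mem (Set.mem_compl hi), Pi.one_apply] at hle
      rw [Set.indicator_of_notMem hk]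
      linarith
  calc (1 - Fintype.card ι * c) * n = n - ∑ _i : ι, c * n := by
        rw [Finset.sum_const, Finset.card_univ, nsmul_eq_mul]
        ring
    _ ≤ n - ∑ i, birkhoffSum T ((K i)ᶜ.indicator 1) n (q i) := by
        gcongr with i
        exact hq i n
    _ = ∑ k ∈ Finset.range n, (1 - ∑ i, (K i)ᶜ.indicator 1 (T^[k] (q i))) := by
        rw [Finset.sum_sub_distrib, Finset.sum_comm]
        simp [birkhoffSum]
    _ ≤ ∑ k ∈ Finset.range n, D.indicator (1 : ℕ → ℝ) k := Finset.sum_le_sum fun k _ => hone k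

end LowerDensity

section MutuallySingular

lemma mutuallySingular_of_ergodic_of_ne {Z : Type*} [MeasurableSpace Z] {T : Z → Z}
    {μ ν : Measure Z} [IsProbabilityMeasure μ] [IsProbabilityMeasure ν]
    (hμ : Ergodic T μ) (hν : Ergodic T ν) (hne : μ ≠ ν) : μ ⟂ₘ ν := by
  obtain ⟨c, hc⟩ := hμ.eq_smul_of_absolutelyContinuous
    (hμ.toMeasurePreserving.singularPart hν.toMeasurePreserving)
    (Measure.absolutelyContinuous_of_le (Measure.singularPart_le μ ν))
  rcases eq_or_ne c 0 with rfl | hc0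
  · rw [zero_smul, Measure.singularPart_eq_zero] at hc
    exact absurd (hν.eq_of_absolutelyContinuous hμ.toMeasurePreserving hc) hne
  · have hsing := Measure.mutuallySingular_singularPart μ ν
    rw [hc] at hsing
    exact hsing.mono_ac (Measure.absolutelyContinuous_smul hc0) .rfl

lemma exists_pairwise_disjoint_measure_compl_eq_zero {Z ι : Type*} [MeasurableSpace Z]
    [Countable ι] {m : ι → Measure Z} (h : Pairwise fun i j => m i ⟂ₘ m j) :
    ∃ E : ι → Set Z, (∀ i, MeasurableSet (E i) ∧ m i (E i)ᶜ = 0) ∧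
      Pairwise fun i j => Disjoint (E i) (E j) := by
  refine ⟨fun i => ⋂ j, ⋂ hij : i ≠ j, (h hij).nullSetᶜ ∩ (h hij.symm).nullSet, fun i => ⟨?_, ?_⟩,
    fun i j hij => ?_⟩
  · exact MeasurableSet.iInter fun j => MeasurableSet.iInter fun hij =>
      (h hij).measurableSet_nullSet.compl.inter (h hij.symm).measurableSet_nullSet
  · simp only [Set.compl_iInter, Set.compl_inter, compl_compl, measure_iUnion_null_iff,
      measure_union_null_iff]
    exact fun j hij => ⟨(h hij).measure_nullSet, (h hij.symm).measure_compl_nullSet⟩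
  · refine Set.disjoint_left.2 fun x hxi hxj => ?_
    simp only [Set.mem_iInter] at hxi hxj
    exact (hxi j hij).1 (hxj i hij.symm).2

lemma exists_pos_forall_le_dist_of_isCompact {Z ι : Type*} [Finite ι] [MetricSpace Z]
    {K : ι → Set Z} (hK : ∀ i, IsCompact (K i)) (hdisj : Pairwise fun i j => Disjoint (K i) (K j)) :
    ∃ δ > 0, Pairwise fun i j => ∀ x ∈ K i, ∀ y ∈ K j, δ ≤ dist x y := by
  have hsmall (i j : ι) : ∀ᶠ δ in nhdsWithin (0 : ℝ) (Set.Ioi 0),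
      i ≠ j → ∀ x ∈ K i, ∀ y ∈ K j, δ ≤ dist x y := by
    by_cases hij : i = j
    · simp [hij]
    obtain ⟨r, hr, hrK⟩ := Metric.exists_pos_forall_lt_edist (hK i) (hK j).isClosed (hdisj hij)
    filter_upwards [Ioc_mem_nhdsGT (NNReal.coe_pos.2 hr)] with δ hδ _ x hx y hy
    have hxy := hrK x hx y hy
    rw [edist_nndist, ENNReal.coe_lt_coe] at hxy
    exact hδ.2.trans (by exact_mod_cast hxy.le)
  obtain ⟨δ, hδK, hδ⟩ := ((eventually_all.2 fun i => eventually_all.2 (hsmall i)).and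
    self_mem_nhdsWithin).exists
  exact ⟨δ, hδ, fun i j => hδK i j⟩

/-- Exhausting disjoint carriers of the measures by compact sets makes them uniformly separated. -/
lemma exists_separated_measureReal_compl_lt {Z ι : Type*} [Finite ι] [MetricSpace Z]
    [PolishSpace Z] [MeasurableSpace Z] [BorelSpace Z] {m : ι → Measure Z}
    [∀ i, IsFiniteMeasure (m i)] (h : Pairwise fun i j => m i ⟂ₘ m j) {ε : ℝ} (hε : 0 < ε) :
    ∃ δ > 0, ∃ K : ι → Set Z, (∀ i, MeasurableSet (K i) ∧ (m i).real (K i)ᶜ < ε) ∧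
      Pairwise fun i j => ∀ x ∈ K i, ∀ y ∈ K j, δ ≤ dist x y := by
  obtain ⟨E, hE, hdisj⟩ := exists_pairwise_disjoint_measure_compl_eq_zero h
  have hcompact (i : ι) : ∃ K ⊆ E i, IsCompact K ∧ m i (E i \ K) < ENNReal.ofReal ε :=
    (hE i).1.exists_isCompact_sdiff_lt (measure_ne_top _ _) (ENNReal.ofReal_pos.2 hε).ne'
  choose K hKE hK hKε using hcompact
  obtain ⟨δ, hδ, hsep⟩ := exists_pos_forall_le_dist_of_isCompact hK
    fun i j hij => (hdisj hij).mono (hKE i) (hKE j)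
  refine ⟨δ, hδ, K, fun i => ⟨(hK i).measurableSet, ?_⟩, hsep⟩
  refine ENNReal.toReal_lt_of_lt_ofReal ?_
  have hcover : (K i)ᶜ ⊆ (E i)ᶜ ∪ E i \ K i := fun z hz =>
    (em (z ∈ E i)).elim (fun hzE => Or.inr ⟨hzE, hz⟩) Or.inl
  calc m i (K i)ᶜ ≤ m i (E i)ᶜ + m i (E i \ K i) :=
        (measure_mono hcover).trans (measure_union_le _ _)
    _ < ENNReal.ofReal ε := by rw [(hE i).2, zero_add]; exact hKε i

lemma exists_fiber_separated_measureReal_compl_lt {X Y ι : Type*} [Finite ι] [MeasurableSpace X]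
    [StandardBorelSpace X] [MetricSpace Y] [PolishSpace Y] [MeasurableSpace Y] [BorelSpace Y]
    {ρ : ι → Measure (X × Y)} [∀ i, IsFiniteMeasure (ρ i)]
    (h : Pairwise fun i j => ρ i ⟂ₘ ρ j) {ε : ℝ} (hε : 0 < ε) :
    ∃ δ > 0, ∃ K : ι → Set (X × Y), (∀ i, MeasurableSet (K i) ∧ (ρ i).real (K i)ᶜ < ε) ∧
      Pairwise fun i j => ∀ x y y', (x, y) ∈ K i → (x, y') ∈ K j → δ ≤ dist y y' := by
  let := upgradeStandardBorel X
  let := TopologicalSpace.upgradeIsCompletelyMetrizable X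
  obtain ⟨δ, hδ, K, hK, hsep⟩ := exists_separated_measureReal_compl_lt h hε
  refine ⟨δ, hδ, K, hK, fun i j hij x y y' hy hy' => ?_⟩
  simpa only [dist_prod_same_left] using hsep hij _ hy _ hy'

end MutuallySingular

section CommonBasePoint

variable {X Ω : Type*} [MeasurableSpace X] [MeasurableSpace Ω] [StandardBorelSpace Ω] [Nonempty Ω]

/-- The set on the left need not be measurable, and it consists of points whose whole conditional
measure is carried by `Gᶜ`. -/
lemma fst_setOf_forall_notMem_le {ρ : Measure (X × Ω)} [IsFiniteMeasure ρ] {G : Set (X × Ω)}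
    (hG : MeasurableSet G) : ρ.fst {x | ∀ y, (x, y) ∉ G} ≤ ρ Gᶜ := by
  have hmeas : Measurable fun x => ρ.condKernel x {y | (x, y) ∈ Gᶜ} :=
    ProbabilityTheory.Kernel.measurable_kernel_prodMk_left hG.compl
  calc ρ.fst {x | ∀ y, (x, y) ∉ G}
      ≤ ρ.fst {x | 1 ≤ ρ.condKernel x {y | (x, y) ∈ Gᶜ}} := measure_mono fun x hx => by
        have huniv : {y | (x, y) ∈ Gᶜ} = Set.univ := Set.eq_univ_of_forall hx
        rw [Set.mem_ofPred_eq, huniv, measure_univ]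
    _ ≤ ∫⁻ x, ρ.condKernel x {y | (x, y) ∈ Gᶜ} ∂ρ.fst := by
        simpa only [one_mul] using mul_meas_ge_le_lintegral hmeas 1
    _ = ρ Gᶜ := Measure.lintegral_condKernel_mem hG.compl

lemma exists_forall_exists_mem_of_sum_lt_one {ι : Type*} [Fintype ι] {μ : Measure X}
    [IsProbabilityMeasure μ] {ρ : ι → Measure (X × Ω)} [∀ i, IsFiniteMeasure (ρ i)]
    (hfst : ∀ i, (ρ i).fst = μ) {G : ι → Set (X × Ω)} (hG : ∀ i, MeasurableSet (G i))
    (hsum : ∑ i, (ρ i).real (G i)ᶜ < 1) {p : X → Prop} (hp : ∀ᵐ x ∂μ, p x) :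
    ∃ x, p x ∧ ∀ i, ∃ y, (x, y) ∈ G i := by
  by_contra! hcon
  have hcover : ∀ᵐ x ∂μ, x ∈ ⋃ i, {x | ∀ y, (x, y) ∉ G i} := by
    filter_upwards [hp] with x hx using Set.mem_iUnion.2 (hcon x hx)
  have hone : 1 ≤ ∑ i, (ρ i) (G i)ᶜ := calc
    1 = μ (⋃ i, {x | ∀ y, (x, y) ∉ G i}) :=
        ((measure_congr (eventuallyEq_univ.2 hcover)).trans measure_univ).symm
    _ ≤ ∑ i, μ {x | ∀ y, (x, y) ∉ G i} := measure_iUnion_fintype_le μ _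
    _ ≤ ∑ i, ρ i (G i)ᶜ := Finset.sum_le_sum fun i _ => by
        rw [← hfst i]
        exact fst_setOf_forall_notMem_le (hG i)
  refine hsum.not_ge ?_
  simp only [Measure.real]
  rw [← ENNReal.toReal_sum fun i _ => measure_ne_top _ _, ← ENNReal.toReal_one]
  exact ENNReal.toReal_mono (ENNReal.sum_ne_top.2 fun i _ => measure_ne_top _ _) hone

end CommonBasePoint

section PlaneGeometry

/-- The Euclidean norm on the coordinate space `Fin d → ℝ`, whose own norm is the sup norm. -/
noncomputable abbrev euclNorm {d : ℕ} (v : Fin d → ℝ) : ℝ := ‖WithLp.toLp 2 v‖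

lemma euclNorm_pos {d : ℕ} {v : Fin d → ℝ} (hv : v ≠ 0) : 0 < euclNorm v :=
  norm_pos_iff.2 ((WithLp.toLp_eq_zero 2).not.2 hv)

lemma euclNorm_smul {d : ℕ} (c : ℝ) (v : Fin d → ℝ) : euclNorm (c • v) = |c| * euclNorm v := by
  rw [euclNorm, WithLp.toLp_smul, norm_smul, Real.norm_eq_abs]

lemma opNorm_le_of_forall_euclNorm_mulVec_le {d : ℕ} {M : Matrix (Fin d) (Fin d) ℝ} {C : ℝ}
    (hC : 0 ≤ C) (h : ∀ v, euclNorm (M.mulVec v) ≤ C * euclNorm v) : opNorm M ≤ C :=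
  ContinuousLinearMap.opNorm_le_bound _ hC fun v => h v.ofLp

/-- The oriented area of the parallelogram spanned by two plane vectors, used to measure the angle
between two lines. -/
def wedge (v w : Fin 2 → ℝ) : ℝ := v 0 * w 1 - v 1 * w 0

lemma wedge_self (v : Fin 2 → ℝ) : wedge v v = 0 := by
  rw [wedge]
  ring

lemma abs_wedge_comm (v w : Fin 2 → ℝ) : |wedge v w| = |wedge w v| := by
  rw [wedge, wedge, ← abs_neg]
  congr 1
  ring

lemma wedge_smul_smul (a b : ℝ) (v w : Fin 2 → ℝ) :
    wedge (a • v) (b • w) = a * b * wedge v w := by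
  simp only [wedge, Pi.smul_apply, smul_eq_mul]
  ring

lemma wedge_mulVec_mulVec (M : Matrix (Fin 2) (Fin 2) ℝ) (v w : Fin 2 → ℝ) :
    wedge (M.mulVec v) (M.mulVec w) = M.det * wedge v w := by
  simp only [wedge, Matrix.det_fin_two, Matrix.mulVec_eq_sum, Fin.sum_univ_two, Pi.add_apply,
    Pi.smul_apply, Matrix.transpose_apply, MulOpposite.smul_eq_mul_unop, MulOpposite.unop_op]
  ring

lemma wedge_smul_eq_add (v w z : Fin 2 → ℝ) :
    wedge v w • z = wedge v z • w + wedge z w • v := by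
  ext i
  fin_cases i <;> simp [wedge] <;> ring

lemma abs_wedge_le (v w : Fin 2 → ℝ) : |wedge v w| ≤ euclNorm v * euclNorm w := by
  refine abs_le_of_sq_le_sq ?_ (by positivity)
  rw [mul_pow, EuclideanSpace.real_norm_sq_eq, EuclideanSpace.real_norm_sq_eq, Fin.sum_univ_two,
    Fin.sum_univ_two, wedge]
  linarith [sq_nonneg (v 0 * w 0 + v 1 * w 1)]

lemma abs_wedge_mul_euclNorm_mulVec_le {d : ℕ} (M : Matrix (Fin d) (Fin 2) ℝ)
    (v w z : Fin 2 → ℝ) :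
    |wedge v w| * euclNorm (M.mulVec z) ≤
      |wedge v z| * euclNorm (M.mulVec w) + |wedge z w| * euclNorm (M.mulVec v) := by
  rw [← euclNorm_smul, ← euclNorm_smul, ← euclNorm_smul, ← Matrix.mulVec_smul, wedge_smul_eq_add,
    Matrix.mulVec_add, Matrix.mulVec_smul, Matrix.mulVec_smul, euclNorm, WithLp.toLp_add]
  exact norm_add_le _ _

lemma abs_wedge_mul_opNorm_le (M : Matrix (Fin 2) (Fin 2) ℝ) (v w : Fin 2 → ℝ) :
    |wedge v w| * opNorm M ≤
      euclNorm v * euclNorm (M.mulVec w) + euclNorm w * euclNorm (M.mulVec v) := by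
  rcases (abs_nonneg (wedge v w)).eq_or_lt with h0 | hpos
  · rw [← h0, zero_mul]
    positivity
  rw [mul_comm, ← le_div_iff₀ hpos]
  refine opNorm_le_of_forall_euclNorm_mulVec_le (by positivity) fun z => ?_
  rw [div_mul_eq_mul_div, le_div_iff₀ hpos, mul_comm]
  calc |wedge v w| * euclNorm (M.mulVec z)
      ≤ |wedge v z| * euclNorm (M.mulVec w) + |wedge z w| * euclNorm (M.mulVec v) :=
        abs_wedge_mul_euclNorm_mulVec_le M v w z
    _ ≤ euclNorm v * euclNorm z * euclNorm (M.mulVec w) +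
          euclNorm z * euclNorm w * euclNorm (M.mulVec v) := by
        gcongr <;> exact abs_wedge_le _ _
    _ = _ := by ring

/-- The sine of the angle between the lines spanned by two vectors. As a function of the lines it
is a metric on the projective line. -/
noncomputable def sinAngle (v w : Fin 2 → ℝ) : ℝ := |wedge v w| / (euclNorm v * euclNorm w)

lemma sinAngle_self (v : Fin 2 → ℝ) : sinAngle v v = 0 := by
  rw [sinAngle, wedge_self, abs_zero, zero_div]

lemma sinAngle_comm (v w : Fin 2 → ℝ) : sinAngle v w = sinAngle w v := by
  rw [sinAngle, sinAngle, abs_wedge_comm, mul_comm]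

lemma sinAngle_smul_smul {a b : ℝ} (ha : a ≠ 0) (hb : b ≠ 0) (v w : Fin 2 → ℝ) :
    sinAngle (a • v) (b • w) = sinAngle v w := by
  rw [sinAngle, wedge_smul_smul, euclNorm_smul, euclNorm_smul, abs_mul, abs_mul,
    mul_mul_mul_comm, mul_div_mul_left _ _ (by positivity), sinAngle]

lemma sinAngle_le_add {v w z : Fin 2 → ℝ} (hv : v ≠ 0) (hw : w ≠ 0) (hz : z ≠ 0) :
    sinAngle v w ≤ sinAngle v z + sinAngle z w := by
  have hv' := euclNorm_pos hv
  have hw' := euclNorm_pos hw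
  have hz' := euclNorm_pos hz
  have h := abs_wedge_mul_euclNorm_mulVec_le (1 : Matrix (Fin 2) (Fin 2) ℝ) v w z
  simp only [Matrix.one_mulVec] at h
  calc sinAngle v w
      = |wedge v w| * euclNorm z / (euclNorm v * euclNorm w * euclNorm z) :=
        (mul_div_mul_right _ _ hz'.ne').symm
    _ ≤ (|wedge v z| * euclNorm w + |wedge z w| * euclNorm v) /
          (euclNorm v * euclNorm w * euclNorm z) := by gcongr
    _ = sinAngle v z + sinAngle z w := by
        rw [sinAngle, sinAngle]
        field_simp

lemma exists_smul_eq_of_sinAngle_eq_zero {v w : Fin 2 → ℝ} (hv : v ≠ 0) (hw : w ≠ 0)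
    (h : sinAngle v w = 0) : ∃ a : ℝ, a • w = v := by
  have hwedge : wedge v w = 0 := by
    rwa [sinAngle, div_eq_zero_iff, or_iff_left (mul_pos (euclNorm_pos hv) (euclNorm_pos hw)).ne',
      abs_eq_zero] at h
  set z : Fin 2 → ℝ := ![-w 1, w 0]
  have hz : wedge z w ≠ 0 := by
    have hsq : wedge z w = -euclNorm w ^ 2 := by
      rw [EuclideanSpace.real_norm_sq_eq, Fin.sum_univ_two]
      simp only [wedge, z, Matrix.cons_val_zero, Matrix.cons_val_one]
      ring
    rw [hsq]
    exact neg_ne_zero.2 (pow_pos (euclNorm_pos hw) 2).ne'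
  have hcramer := wedge_smul_eq_add v w z
  rw [hwedge, zero_smul, eq_comm, add_eq_zero_iff_eq_neg] at hcramer
  refine ⟨-(wedge v z / wedge z w), ?_⟩
  rw [neg_smul, div_eq_inv_mul, mul_smul, hcramer, smul_neg, neg_neg, inv_smul_smul₀ hz]

end PlaneGeometry

section ProjectiveLine

open Projectivization

noncomputable instance : MetricSpace (Proj 2) where
  dist u v := sinAngle u.rep v.rep
  dist_self u := sinAngle_self u.rep
  dist_comm u v := sinAngle_comm u.rep v.rep
  dist_triangle u v w := sinAngle_le_add u.rep_nonzero w.rep_nonzero v.rep_nonzero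
  eq_of_dist_eq_zero {u v} h := by
    rw [← u.mk_rep, ← v.mk_rep, mk_eq_mk_iff']
    exact exists_smul_eq_of_sinAngle_eq_zero u.rep_nonzero v.rep_nonzero h

lemma dist_mk_mk {v w : Fin 2 → ℝ} (hv : v ≠ 0) (hw : w ≠ 0) :
    dist (mk ℝ v hv) (mk ℝ w hw) = sinAngle v w := by
  obtain ⟨a, ha⟩ := exists_smul_eq_mk_rep ℝ v hv
  obtain ⟨b, hb⟩ := exists_smul_eq_mk_rep ℝ w hw
  change sinAngle (mk ℝ v hv).rep (mk ℝ w hw).rep = _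
  rw [← ha, ← hb]
  exact sinAngle_smul_smul a.ne_zero b.ne_zero v w

lemma dist_proj_le_one (u v : Proj 2) : dist u v ≤ 1 :=
  div_le_one_of_le₀ (abs_wedge_le _ _) (by positivity)

lemma continuous_projectivization_mk :
    Continuous fun v : {v : Fin 2 → ℝ // v ≠ 0} => (mk ℝ v.1 v.2 : Proj 2) := by
  refine continuous_iff_continuousAt.2 fun v => tendsto_iff_dist_tendsto_zero.2 ?_
  simp only [dist_mk_mk]
  rw [← sinAngle_self v.1]
  have hne := (mul_pos (euclNorm_pos v.2) (euclNorm_pos v.2)).ne'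
  have hsin : ContinuousAt (sinAngle · v.1) v.1 := by
    unfold sinAngle wedge
    fun_prop (disch := exact hne)
  exact hsin.tendsto.comp continuous_subtype_val.continuousAt

lemma exists_euclNorm_eq_one_mk_eq {d : ℕ} (u : Proj d) :
    ∃ (v : Fin d → ℝ) (hv : v ≠ 0), euclNorm v = 1 ∧ mk ℝ v hv = u := by
  have hpos := euclNorm_pos u.rep_nonzero
  refine ⟨(euclNorm u.rep)⁻¹ • u.rep, smul_ne_zero (inv_ne_zero hpos.ne') u.rep_nonzero, ?_, ?_⟩
  · rw [euclNorm_smul, abs_of_pos (inv_pos.2 hpos), inv_mul_cancel₀ hpos.ne']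
  · conv_rhs => rw [← u.mk_rep]
    exact (mk_eq_mk_iff' ..).2 ⟨_, rfl⟩

instance : CompactSpace (Proj 2) := by
  let e : Metric.sphere (0 : EuclideanSpace ℝ (Fin 2)) 1 → {v : Fin 2 → ℝ // v ≠ 0} := fun v =>
    ⟨v.1.ofLp, (WithLp.ofLp_eq_zero 2).not.2 (ne_zero_of_mem_unit_sphere v)⟩
  have he : Continuous e :=
    ((PiLp.continuous_ofLp 2 _).comp continuous_subtype_val).subtype_mk _
  have hcont := continuous_projectivization_mk.comp he
  refine Function.Surjective.compactSpace hcont fun u => ?_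
  obtain ⟨v, hv, hv1, rfl⟩ := exists_euclNorm_eq_one_mk_eq u
  exact ⟨⟨WithLp.toLp 2 v, mem_sphere_zero_iff_norm.2 hv1⟩, rfl⟩

instance : BorelSpace (Proj 2) where
  measurable_eq := by
    -- The σ-algebra of `Proj 2` is by definition the pushforward of the Borel one along `mk`.
    have : PolishSpace {v : Fin 2 → ℝ // v ≠ 0} := isOpen_ne.polishSpace
    exact Continuous.map_eq_borel (Y := Proj 2) continuous_projectivization_mk
      (ind fun v hv => ⟨⟨v, hv⟩, rfl⟩)

end ProjectiveLine

section ProjectiveAction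

open Projectivization

variable {d : ℕ}

lemma mulVec_ne_zero (g : GL (Fin d) ℝ) {v : Fin d → ℝ} (hv : v ≠ 0) : g.1.mulVec v ≠ 0 := by
  rw [← Matrix.toLin'_apply]
  exact (map_ne_zero_iff _ (glInjective g)).2 hv

lemma projAction_mk (g : GL (Fin d) ℝ) {v : Fin d → ℝ} (hv : v ≠ 0) :
    projAction g (mk ℝ v hv) = mk ℝ (g.1.mulVec v) (mulVec_ne_zero g hv) :=
  map_mk ..

lemma projAction_one (u : Proj d) : projAction 1 u = u := by
  induction u using Projectivization.ind with
  | h v hv =>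
    rw [projAction_mk]
    congr 1
    exact Matrix.one_mulVec v

lemma projAction_mul (g h : GL (Fin d) ℝ) (u : Proj d) :
    projAction (g * h) u = projAction g (projAction h u) := by
  induction u using Projectivization.ind with
  | h v hv =>
    rw [projAction_mk, projAction_mk, projAction_mk]
    congr 1
    exact (Matrix.mulVec_mulVec v g.1 h.1).symm

lemma euclNorm_mul_euclNorm_mul_dist_projAction_mk (g : GL (Fin 2) ℝ) {v w : Fin 2 → ℝ}
    (hv : v ≠ 0) (hw : w ≠ 0) :
    euclNorm (g.1.mulVec v) * euclNorm (g.1.mulVec w) *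
      dist (projAction g (mk ℝ v hv)) (projAction g (mk ℝ w hw)) = |g.1.det| * |wedge v w| := by
  have hgv := euclNorm_pos (mulVec_ne_zero g hv)
  have hgw := euclNorm_pos (mulVec_ne_zero g hw)
  rw [projAction_mk, projAction_mk, dist_mk_mk, sinAngle, wedge_mulVec_mulVec, abs_mul,
    mul_div_cancel₀ _ (by positivity)]

lemma euclNorm_mulVec_le_or_le_of_le_dist {g : GL (Fin 2) ℝ} (hdet : |g.1.det| ≤ 1) {δ : ℝ}
    (hδ : 0 < δ) {v w : Fin 2 → ℝ} (hv : v ≠ 0) (hw : w ≠ 0) (hv1 : euclNorm v = 1)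
    (hw1 : euclNorm w = 1)
    (h : δ ≤ dist (projAction g (mk ℝ v hv)) (projAction g (mk ℝ w hw))) :
    euclNorm (g.1.mulVec v) ≤ 1 / δ ∨ euclNorm (g.1.mulVec w) ≤ 1 / δ := by
  by_contra! hlong
  have hone : 1 ≤ 1 / δ := (one_le_div hδ).2 (h.trans (dist_proj_le_one _ _))
  have hwedge : |wedge v w| ≤ 1 := by simpa only [hv1, hw1, mul_one] using abs_wedge_le v w
  refine lt_irrefl (1 : ℝ) ?_
  calc (1 : ℝ) = 1 / δ * 1 * δ := by field_simp
    _ < euclNorm (g.1.mulVec v) * euclNorm (g.1.mulVec w) * δ := by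
        have hvlong := hlong.1
        have hwlong := hone.trans_lt hlong.2
        gcongr
    _ ≤ euclNorm (g.1.mulVec v) * euclNorm (g.1.mulVec w) *
          dist (projAction g (mk ℝ v hv)) (projAction g (mk ℝ w hw)) := by gcongr
    _ = |g.1.det| * |wedge v w| := euclNorm_mul_euclNorm_mul_dist_projAction_mk g hv hw
    _ ≤ 1 := mul_le_one₀ hdet (abs_nonneg _) hwedge

/-- Two of three lines that stay separated are stretched little, because otherwise the bound on the
determinant would bring them together. These two lines control the norm. -/
theorem opNorm_le_of_le_dist {g : GL (Fin 2) ℝ} (hdet : |g.1.det| ≤ 1) {δ : ℝ} (hδ : 0 < δ)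
    {u : Fin 3 → Proj 2} (hu : Pairwise fun i j => δ ≤ dist (u i) (u j))
    (hgu : Pairwise fun i j => δ ≤ dist (projAction g (u i)) (projAction g (u j))) :
    opNorm g.1 ≤ 2 / δ ^ 2 := by
  choose v hv hv1 hvu using fun i => exists_euclNorm_eq_one_mk_eq (u i)
  have hshort {i j} (hij : i ≠ j) :
      euclNorm (g.1.mulVec (v i)) ≤ 1 / δ ∨ euclNorm (g.1.mulVec (v j)) ≤ 1 / δ :=
    euclNorm_mulVec_le_or_le_of_le_dist hdet hδ (hv i) (hv j) (hv1 i) (hv1 j)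
      (by simpa only [hvu] using hgu hij)
  obtain ⟨i, j, hij, hi, hj⟩ : ∃ i j, i ≠ j ∧ euclNorm (g.1.mulVec (v i)) ≤ 1 / δ ∧
      euclNorm (g.1.mulVec (v j)) ≤ 1 / δ := by
    have h01 := hshort (i := 0) (j := 1) (by decide)
    have h02 := hshort (i := 0) (j := 2) (by decide)
    have h12 := hshort (i := 1) (j := 2) (by decide)
    grind
  have hsep : δ ≤ |wedge (v i) (v j)| := by
    simpa only [← hvu, dist_mk_mk, sinAngle, hv1, mul_one, div_one] using hu hij
  have hnorm := abs_wedge_mul_opNorm_le g.1 (v i) (v j)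
  rw [hv1, hv1, one_mul, one_mul] at hnorm
  have hnonneg : 0 ≤ opNorm g.1 := norm_nonneg _
  rw [le_div_iff₀ (by positivity)]
  calc opNorm g.1 * δ ^ 2 = δ * opNorm g.1 * δ := by ring
    _ ≤ |wedge (v i) (v j)| * opNorm g.1 * δ := by gcongr
    _ ≤ (1 / δ + 1 / δ) * δ := by gcongr; linarith
    _ = 2 := by
        field_simp
        norm_num

end ProjectiveAction

section SkewProduct

variable {X : Type*} {d : ℕ} {f : X → X} {A : X → GL (Fin d) ℝ}

/-- The projective skew product `F(x, E) = (f x, A(x) E)` on `X × ℙ(ℝ^d)`. -/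
noncomputable def skewProduct (f : X → X) (A : X → GL (Fin d) ℝ) : X × Proj d → X × Proj d :=
  fun q => (f q.1, projAction (A q.1) q.2)

lemma skewProduct_iterate (n : ℕ) (x : X) (u : Proj d) :
    (skewProduct f A)^[n] (x, u) = (f^[n] x, projAction (cocycleIter f A n x) u) := by
  induction n generalizing x u with
  | zero => simp only [Function.iterate_zero, id, cocycleIter, projAction_one]
  | succ n ih =>
    simp only [Function.iterate_succ_apply, skewProduct, cocycleIter, projAction_mul] at ih ⊢
    exact ih (f x) (projAction (A x) u)

lemma abs_det_cocycleIter_le_one (hdet : ∀ x, |(A x).1.det| ≤ 1) (n : ℕ) (x : X) :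
    |(cocycleIter f A n x).1.det| ≤ 1 := by
  induction n generalizing x with
  | zero => simp [cocycleIter]
  | succ n ih =>
    rw [cocycleIter, Units.val_mul, Matrix.det_mul, abs_mul]
    exact mul_le_one₀ (ih (f x)) (abs_nonneg _) (hdet x)

end SkewProduct

section InvariantMeasures

variable {X : Type*} [MeasurableSpace X] {μ : Measure X} [IsProbabilityMeasure μ]

lemma exists_forall_mem_sojournSet {Y ι : Type*} [MeasurableSpace Y] [StandardBorelSpace Y]
    [Nonempty Y] [Fintype ι] {F : X × Y → X × Y} {ρ : ι → Measure (X × Y)}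
    [∀ i, IsFiniteMeasure (ρ i)] (hF : ∀ i, MeasurePreserving F (ρ i) (ρ i))
    (hfst : ∀ i, (ρ i).fst = μ) {K : ι → Set (X × Y)} (hK : ∀ i, MeasurableSet (K i)) {c : ℝ}
    (hc : 0 < c) (hKc : ∑ i, (ρ i).real (K i)ᶜ < c) {p : X → Prop} (hp : ∀ᵐ x ∂μ, p x) :
    ∃ x, p x ∧ ∃ y : ι → Y, ∀ i, (x, y i) ∈ sojournSet F (K i) c := by
  have hsum : ∑ i, (ρ i).real (sojournSet F (K i) c)ᶜ < 1 := by
    refine lt_of_mul_lt_mul_left ?_ hc.le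
    rw [Finset.mul_sum, mul_one]
    exact (Finset.sum_le_sum fun i _ =>
      mul_measureReal_compl_sojournSet_le (hF i) (hK i) c).trans_lt hKc
  obtain ⟨x, hx, hy⟩ := exists_forall_exists_mem_of_sum_lt_one hfst
    (fun i => measurableSet_sojournSet (hF i).measurable (hK i)) hsum hp
  choose y hy using hy
  exact ⟨x, hx, y, hy⟩

theorem exists_lowerDensity_opNorm_cocycleIter_le_pos [StandardBorelSpace X] {f : X → X}
    {A : X → GL (Fin 2) ℝ} (hdet : ∀ x, |(A x).1.det| ≤ 1) {ρ : Fin 3 → Measure (X × Proj 2)}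
    [∀ i, IsProbabilityMeasure (ρ i)]
    (hF : ∀ i, MeasurePreserving (skewProduct f A) (ρ i) (ρ i)) (hfst : ∀ i, (ρ i).fst = μ)
    (hsing : Pairwise fun i j => ρ i ⟂ₘ ρ j) {p : X → Prop} (hp : ∀ᵐ x ∂μ, p x) :
    ∃ x, p x ∧ ∃ C > 0, 0 < lowerDensity {n | opNorm (cocycleIter f A n x).1 ≤ C} := by
  obtain ⟨δ, hδ, K, hK, hsep⟩ :=
    exists_fiber_separated_measureReal_compl_lt hsing (ε := 1 / 12) (by norm_num)
  have hK4 : ∑ i, (ρ i).real (K i)ᶜ < 1 / 4 := by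
    rw [Fin.sum_univ_three]
    linarith [(hK 0).2, (hK 1).2, (hK 2).2]
  obtain ⟨x, hx, u, hu⟩ :=
    exists_forall_mem_sojournSet hF hfst (fun i => (hK i).1) (by norm_num) hK4 hp
  refine ⟨x, hx, 2 / δ ^ 2, by positivity, ?_⟩
  have hdensity := le_lowerDensity_of_mem_sojournSet hu
    (D := {n | opNorm (cocycleIter f A n x).1 ≤ 2 / δ ^ 2}) fun n hn => by
      simp only [skewProduct_iterate] at hn
      have hu0 (i) : (x, u i) ∈ K i := mem_of_mem_sojournSet (by norm_num) (hu i)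
      exact opNorm_le_of_le_dist (abs_det_cocycleIter_le_one hdet n x) hδ
        (fun i j hij => hsep hij x _ _ (hu0 i) (hu0 j))
        (fun i j hij => hsep hij _ _ _ (hn i) (hn j))
  rw [Fintype.card_fin] at hdensity
  norm_num at hdensity
  linarith

end InvariantMeasures

theorem stmt6_general {X : Type*} [MeasurableSpace X] [StandardBorelSpace X] {μ : Measure X}
    {f : X → X} {A : X → GL (Fin 2) ℝ}
    (hdet : ∀ x, |(A x).1.det| ≤ 1)
    (hunb : ∀ᵐ x ∂μ, ConvergesEssentiallyToInfinity fun n =>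
      opNorm (cocycleIter f A n x).1) :
    {ρ : Measure (X × Proj 2) | IsProbabilityMeasure ρ ∧ ρ.map Prod.fst = μ ∧
      Ergodic (skewProduct f A) ρ}.encard ≤ 2 := by
  refine encard_le_two_iff.2 fun μ₁ h₁ μ₂ h₂ μ₃ h₃ => ?_
  by_contra! hne
  let ρ : Fin 3 → Measure (X × Proj 2) := ![μ₁, μ₂, μ₃]
  have hρ : ∀ i, IsProbabilityMeasure (ρ i) ∧ (ρ i).fst = μ ∧ Ergodic (skewProduct f A) (ρ i) :=
    Fin.forall_fin_succ.2 ⟨h₁, Fin.forall_fin_two.2 ⟨h₂, h₃⟩⟩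
  choose hprob hfst herg using hρ
  have hinj : ρ.Injective := List.nodup_ofFn.1 (by simp [ρ, hne])
  have hμ : IsProbabilityMeasure μ := hfst 0 ▸ inferInstance
  obtain ⟨x, hx, C, hC, hpos⟩ := exists_lowerDensity_opNorm_cocycleIter_le_pos hdet
    (fun i => (herg i).toMeasurePreserving) hfst
    (fun i j hij => mutuallySingular_of_ergodic_of_ne (herg i) (herg j) (hinj.ne hij)) hunb
  exact hpos.ne' (hx C hC)

/-- An essentially unbounded `SL±(2)`-valued cocycle over an ergodic
invertible transformation admits at most two ergodic invariant probability measures on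
`X × ℙ(ℝ²)` projecting to `μ`. -/
theorem stmt6
    {X : Type*} [MeasurableSpace X] [StandardBorelSpace X]
    (μ : Measure X) [IsProbabilityMeasure μ]
    (f : X → X) (hbij : Function.Bijective f) (herg : Ergodic f μ)
    (A : X → GL (Fin 2) ℝ)
    (hA : Measurable fun x => ((A x : Matrix (Fin 2) (Fin 2) ℝ)))
    (hdet : ∀ x, (A x : Matrix (Fin 2) (Fin 2) ℝ).det = 1 ∨
                 (A x : Matrix (Fin 2) (Fin 2) ℝ).det = -1)
    (hunb : ∀ᵐ x ∂μ, ConvergesEssentiallyToInfinity fun n =>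
        opNorm ((cocycleIter f A n x : GL (Fin 2) ℝ) : Matrix (Fin 2) (Fin 2) ℝ))
    :
    ∀ μ₁ μ₂ μ₃ : Measure (X × Proj 2),
      IsProbabilityMeasure μ₁ → μ₁.map Prod.fst = μ →
      Ergodic (fun q : X × Proj 2 => (f q.1, projAction (A q.1) q.2)) μ₁ →
      IsProbabilityMeasure μ₂ → μ₂.map Prod.fst = μ →
      Ergodic (fun q : X × Proj 2 => (f q.1, projAction (A q.1) q.2)) μ₂ →
      IsProbabilityMeasure μ₃ → μ₃.map Prod.fst = μ →
      Ergodic (fun q : X × Proj 2 => (f q.1, projAction (A q.1) q.2)) μ₃ →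
      μ₁ = μ₂ ∨ μ₁ = μ₃ ∨ μ₂ = μ₃ := by
  intro μ₁ μ₂ μ₃ hprob₁ hfst₁ herg₁ hprob₂ hfst₂ herg₂ hprob₃ hfst₃ herg₃
  exact encard_le_two_iff.1
    (stmt6_general (fun x => by rcases hdet x with h | h <;> simp [h]) hunb)
    μ₁ ⟨hprob₁, hfst₁, herg₁⟩ μ₂ ⟨hprob₂, hfst₂, herg₂⟩ μ₃ ⟨hprob₃, hfst₃, herg₃⟩
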